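/- For every nonempty compact subset K of the complex plane there exist a complex Hilbert space H, a dense subspace D of H, and a linear operator A : D → H with closed graph which is unbounded (no constant C ≥ 0 satisfies ‖A x‖ ≤ C‖x‖ for all x ∈ D), such that for every λ ∈ ℂ: λ ∉ K if and only if there exists a bounded linear operator R : H → H with R(H) ⊆ D, (A − λI)(R y) = y for all y ∈ H, and R((A − λI) x) = x for all x ∈ D. -/

import Mathlib

/-!
Multiplication by the coordinate function on `ℓ²(K)` has the points of `K` as eigenvalues, hence
spectrum `closure K = K`, but it is bounded when `K` is. Adding as a direct summand an unbounded
operator with empty spectrum makes it unbounded and leaves the spectrum unchanged. Such a summand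
is the weighted shift `(S x) n = 2 ^ |n| * x (n + 1)` on `ℓ²(ℤ)`: the product of any `2 * j`
consecutive weights is at least `2 ^ j ^ 2`, so `S⁻¹` is bounded and quasinilpotent, and
`S - z = (1 - z S⁻¹) S` is invertible for every `z`.
-/

open Filter Function Topology
open scoped ENNReal lp

section Spectrum

variable {𝕜 E : Type*} [NontriviallyNormedField 𝕜] [NormedAddCommGroup E] [NormedSpace 𝕜 E]

/-- `R` is the resolvent `(A - z)⁻¹` of the partially defined operator `A` at the point `z`: an
everywhere defined bounded operator, with values in the domain of `A`, inverting `A - z`. -/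
structure IsResolventAt (A : E →ₗ.[𝕜] E) (z : 𝕜) (R : E →L[𝕜] E) : Prop where
  mem_domain : ∀ y, R y ∈ A.domain
  apply_right : ∀ y, A ⟨R y, mem_domain y⟩ - z • R y = y
  apply_left : ∀ x : A.domain, R (A x - z • (x : E)) = x

/-- The spectrum of a partially defined operator: the points at which it has no resolvent. -/
def pmapSpectrum (A : E →ₗ.[𝕜] E) : Set 𝕜 :=
  {z | ¬∃ R, IsResolventAt A z R}

theorem notMem_pmapSpectrum_iff {A : E →ₗ.[𝕜] E} {z : 𝕜} :
    z ∉ pmapSpectrum A ↔ ∃ R, IsResolventAt A z R :=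
  not_not

namespace IsResolventAt

variable {A : E →ₗ.[𝕜] E} {z μ : 𝕜} {R : E →L[𝕜] E}

theorem of_graph (hr : ∀ y, (R y, y + z • R y) ∈ A.graph)
    (hl : ∀ x : A.domain, R (A x - z • (x : E)) = x) : IsResolventAt A z R where
  mem_domain y := LinearPMap.mem_domain_iff.2 ⟨_, hr y⟩
  apply_right y := by
    rw [sub_eq_iff_eq_add]
    exact A.mem_graph_snd_inj (A.mem_graph _) (hr y) rfl
  apply_left := hl

theorem norm_le (h : IsResolventAt A z R) (x : A.domain) :
    ‖(x : E)‖ ≤ ‖R‖ * ‖A x - z • (x : E)‖ := by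
  simpa only [h.apply_left] using R.le_opNorm (A x - z • (x : E))

/-- This rests on the factorisation `A - z = (1 - (z - μ) • R) (A - μ)`. -/
theorem notMem_pmapSpectrum_of_isUnit (h : IsResolventAt A μ R)
    (hu : IsUnit (1 - (z - μ) • R)) : z ∉ pmapSpectrum A := by
  obtain ⟨U, hUr, hUl⟩ := isUnit_iff_exists.1 hu
  have right_inv (y : E) : U y - (z - μ) • R (U y) = y := DFunLike.congr_fun hUr y
  have left_inv (y : E) : U (y - (z - μ) • R y) = y := DFunLike.congr_fun hUl y
  have comm : Commute R U :=
    (((Commute.one_right R).sub_right ((Commute.refl R).smul_right (z - μ))).units_inv_right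
      (u := ⟨1 - (z - μ) • R, U, hUr, hUl⟩))
  refine notMem_pmapSpectrum_iff.2 ⟨R * U, fun y ↦ h.mem_domain (U y), fun y ↦ ?_, fun x ↦ ?_⟩
  · calc A ⟨R (U y), _⟩ - z • R (U y)
        = (A ⟨R (U y), h.mem_domain _⟩ - μ • R (U y)) - (z - μ) • R (U y) := by module
      _ = y := by rw [h.apply_right, right_inv]
  · calc (R * U) (A x - z • (x : E))
        = U (R ((A x - μ • (x : E)) - (z - μ) • (x : E))) := by
          rw [comm.eq, mul_apply_eq_comp]
          congr 2
          module
      _ = x := by rw [map_sub, map_smul, h.apply_left, left_inv]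

theorem of_retract {F : Type*} [NormedAddCommGroup F] [NormedSpace 𝕜 F] {B : F →ₗ.[𝕜] F}
    {T : F →L[𝕜] F} (hT : IsResolventAt B z T) {J : E →L[𝕜] F} {P : F →L[𝕜] E}
    (hPJ : ∀ x, P (J x) = x) (hJ : ∀ x : A.domain, (J x, J (A x)) ∈ B.graph)
    (hP : ∀ w : B.domain, (P w, P (B w)) ∈ A.graph) : ∃ R, IsResolventAt A z R := by
  refine ⟨P ∘L T ∘L J, .of_graph (fun y ↦ ?_) fun x ↦ ?_⟩
  · have hB : B ⟨T (J y), hT.mem_domain (J y)⟩ = J y + z • T (J y) :=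
      sub_eq_iff_eq_add.1 (hT.apply_right (J y))
    change (P (T (J y)), y + z • P (T (J y))) ∈ A.graph
    simpa only [hB, map_add, map_smul, hPJ] using hP ⟨T (J y), hT.mem_domain (J y)⟩
  · obtain ⟨w, hw, hBw⟩ := B.mem_graph_iff.1 (hJ x)
    calc P (T (J (A x - z • (x : E))))
        = P (T (B w - z • (w : F))) := by rw [hBw, hw, map_sub, map_smul]
      _ = x := by rw [hT.apply_left, hw, hPJ]

end IsResolventAt

end Spectrum

section DirectSum

variable {𝕜 E F : Type*} [NontriviallyNormedField 𝕜] [NormedAddCommGroup E] [NormedSpace 𝕜 E]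
  [NormedAddCommGroup F] [NormedSpace 𝕜 F] (p : ℝ≥0∞)

/-- The direct sum of two partially defined operators, acting on the `ℓᵖ` direct sum of the
underlying spaces, with the direct sum of the two domains as its domain. -/
def pmapDirectSum (A : E →ₗ.[𝕜] E) (B : F →ₗ.[𝕜] F) :
    WithLp p (E × F) →ₗ.[𝕜] WithLp p (E × F) where
  domain := (A.domain.prod B.domain).comap (WithLp.linearEquiv p 𝕜 (E × F)).toLinearMap
  toFun :=
    { toFun x := WithLp.toLp p (A ⟨x.1.fst, x.2.1⟩, B ⟨x.1.snd, x.2.2⟩)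
      map_add' x y := congrArg (WithLp.toLp p) <| Prod.ext
        (A.map_add ⟨x.1.fst, x.2.1⟩ ⟨y.1.fst, y.2.1⟩) (B.map_add ⟨x.1.snd, x.2.2⟩ ⟨y.1.snd, y.2.2⟩)
      map_smul' c x := congrArg (WithLp.toLp p) <| Prod.ext
        (A.map_smul c ⟨x.1.fst, x.2.1⟩) (B.map_smul c ⟨x.1.snd, x.2.2⟩) }

variable {p} {A : E →ₗ.[𝕜] E} {B : F →ₗ.[𝕜] F}

theorem mem_graph_pmapDirectSum_iff {x y : WithLp p (E × F)} :
    (x, y) ∈ (pmapDirectSum p A B).graph ↔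
      (x.fst, y.fst) ∈ A.graph ∧ (x.snd, y.snd) ∈ B.graph := by
  simp only [LinearPMap.mem_graph_iff]
  constructor
  · rintro ⟨⟨x, hx⟩, rfl, rfl⟩
    exact ⟨⟨⟨x.fst, hx.1⟩, rfl, rfl⟩, ⟨⟨x.snd, hx.2⟩, rfl, rfl⟩⟩
  · rintro ⟨⟨a, ha, haA⟩, ⟨b, hb, hbB⟩⟩
    obtain ⟨a, hA⟩ := a
    obtain ⟨b, hB⟩ := b
    subst ha hb
    exact ⟨⟨x, hA, hB⟩, rfl, WithLp.ofLp_injective p (Prod.ext haA hbB)⟩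

theorem isClosed_pmapDirectSum (hA : A.IsClosed) (hB : B.IsClosed) :
    (pmapDirectSum p A B).IsClosed := by
  have graph_eq : ((pmapDirectSum p A B).graph : Set (WithLp p (E × F) × WithLp p (E × F))) =
      (fun z ↦ (z.1.fst, z.2.fst)) ⁻¹' A.graph ∩ (fun z ↦ (z.1.snd, z.2.snd)) ⁻¹' B.graph :=
    Set.ext fun _ ↦ mem_graph_pmapDirectSum_iff
  have fst_cont := WithLp.continuous_fst p E F
  have snd_cont := WithLp.continuous_snd p E F
  rw [LinearPMap.IsClosed, graph_eq]
  exact (hA.preimage ((fst_cont.comp continuous_fst).prodMk (fst_cont.comp continuous_snd))).inter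
    (hB.preimage ((snd_cont.comp continuous_fst).prodMk (snd_cont.comp continuous_snd)))

theorem dense_domain_pmapDirectSum (hA : Dense (A.domain : Set E)) (hB : Dense (B.domain : Set F)) :
    Dense ((pmapDirectSum p A B).domain : Set (WithLp p (E × F))) :=
  (hA.prod hB).preimage (WithLp.homeomorphProd p E F).isOpenMap

variable [Fact (1 ≤ p)]

theorem IsResolventAt.directSum {z : 𝕜} {R : E →L[𝕜] E} {S : F →L[𝕜] F}
    (hR : IsResolventAt A z R) (hS : IsResolventAt B z S) :
    ∃ T, IsResolventAt (pmapDirectSum p A B) z T := by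
  let e := WithLp.prodContinuousLinearEquiv p 𝕜 E F
  refine ⟨e.symm.toContinuousLinearMap ∘L R.prodMap S ∘L e.toContinuousLinearMap,
    fun y ↦ ⟨hR.mem_domain y.fst, hS.mem_domain y.snd⟩, fun y ↦ ?_, fun x ↦ ?_⟩
  · exact WithLp.ofLp_injective p (Prod.ext (hR.apply_right y.fst) (hS.apply_right y.snd))
  · exact WithLp.ofLp_injective p
      (Prod.ext (hR.apply_left ⟨x.1.fst, x.2.1⟩) (hS.apply_left ⟨x.1.snd, x.2.2⟩))

theorem pmapSpectrum_pmapDirectSum :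
    pmapSpectrum (pmapDirectSum p A B) = pmapSpectrum A ∪ pmapSpectrum B := by
  let e := WithLp.prodContinuousLinearEquiv p 𝕜 E F
  ext z
  rw [← not_iff_not, Set.mem_union, not_or]
  simp only [notMem_pmapSpectrum_iff]
  refine ⟨fun ⟨T, hT⟩ ↦ ⟨?_, ?_⟩, fun ⟨⟨R, hR⟩, ⟨S, hS⟩⟩ ↦ hR.directSum hS⟩
  · refine hT.of_retract (J := e.symm.toContinuousLinearMap ∘L .inl 𝕜 E F)
      (P := WithLp.fstL p 𝕜 E F) (fun x ↦ rfl) (fun x ↦ ?_) (fun w ↦ ?_)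
    · exact mem_graph_pmapDirectSum_iff.2 ⟨A.mem_graph x, B.graph.zero_mem⟩
    · exact (mem_graph_pmapDirectSum_iff.1 (LinearPMap.mem_graph _ w)).1
  · refine hT.of_retract (J := e.symm.toContinuousLinearMap ∘L .inr 𝕜 E F)
      (P := WithLp.sndL p 𝕜 E F) (fun x ↦ rfl) (fun x ↦ ?_) (fun w ↦ ?_)
    · exact mem_graph_pmapDirectSum_iff.2 ⟨A.graph.zero_mem, B.mem_graph x⟩
    · exact (mem_graph_pmapDirectSum_iff.1 (LinearPMap.mem_graph _ w)).2

theorem norm_le_of_norm_pmapDirectSum_le_right {C : ℝ}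
    (h : ∀ x : (pmapDirectSum p A B).domain, ‖pmapDirectSum p A B x‖ ≤ C * ‖(x : WithLp p (E × F))‖)
    (y : B.domain) : ‖B y‖ ≤ C * ‖(y : F)‖ := by
  have hy := h ⟨WithLp.toLp p (0, y), A.domain.zero_mem, y.2⟩
  rw [WithLp.norm_toLp_snd] at hy
  exact (WithLp.norm_snd_le _ _).trans hy

end DirectSum

section CompInjective

variable {ι κ E : Type*} [NormedAddCommGroup E] {p : ℝ≥0∞} {σ : ι → κ}

theorem memℓp_comp_injective (hσ : Injective σ) {f : κ → E} (hf : Memℓp f p) :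
    Memℓp (f ∘ σ) p := by
  obtain rfl | rfl | hp := p.trichotomy
  · exact memℓp_zero (hf.finite_dsupport.preimage hσ.injOn)
  · exact memℓp_infty (hf.bddAbove.mono (Set.range_comp_subset_range σ fun k ↦ ‖f k‖))
  · exact memℓp_gen ((hf.summable hp).comp_injective hσ)

theorem norm_le_mul_norm_of_injective (hp : p ≠ 0) (hσ : Injective σ) {C : ℝ} (hC : 0 ≤ C)
    {x : ℓ^p(κ, E)} {y : ℓ^p(ι, E)} (h : ∀ i, ‖y i‖ ≤ C * ‖x (σ i)‖) : ‖y‖ ≤ C * ‖x‖ := by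
  classical
  obtain rfl | rfl | hp := p.trichotomy
  · exact absurd rfl hp
  · refine lp.norm_le_of_forall_le (mul_nonneg hC (lp.norm_nonneg' x)) fun i ↦ (h i).trans ?_
    gcongr
    exact lp.norm_apply_le_norm hp x (σ i)
  · refine lp.norm_le_of_forall_sum_le hp (mul_nonneg hC (lp.norm_nonneg' x)) fun s ↦ ?_
    calc ∑ i ∈ s, ‖y i‖ ^ p.toReal
        ≤ ∑ i ∈ s, C ^ p.toReal * ‖x (σ i)‖ ^ p.toReal := by
          gcongr with i
          rw [← Real.mul_rpow hC (norm_nonneg _)]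
          exact Real.rpow_le_rpow (norm_nonneg _) (h i) hp.le
      _ = C ^ p.toReal * ∑ k ∈ s.image σ, ‖x k‖ ^ p.toReal := by
          rw [Finset.sum_image hσ.injOn, Finset.mul_sum]
      _ ≤ C ^ p.toReal * ‖x‖ ^ p.toReal := by
          gcongr
          exact lp.sum_rpow_le_norm_rpow hp x _
      _ = (C * ‖x‖) ^ p.toReal := (Real.mul_rpow hC (lp.norm_nonneg' x)).symm

end CompInjective

section WeightedComp

variable {ι 𝕜 : Type*} [NontriviallyNormedField 𝕜] (p : ℝ≥0∞)

/-- The weighted composition operator `x ↦ (i ↦ c i * x (σ i))` on `ℓᵖ`, with its maximal domain: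
all `x` in `ℓᵖ` whose image under this formula is again in `ℓᵖ`. -/
def weightedComp (σ : ι → ι) (c : ι → 𝕜) : ℓ^p(ι, 𝕜) →ₗ.[𝕜] ℓ^p(ι, 𝕜) where
  domain :=
    { carrier := {x | Memℓp (fun i ↦ c i * x (σ i)) p}
      add_mem' := fun {x y} hx hy ↦ by
        change Memℓp (fun i ↦ c i * (x (σ i) + y (σ i))) p
        simp only [mul_add]
        exact hx.add hy
      zero_mem' := by
        change Memℓp (fun i ↦ c i * (0 : 𝕜)) p
        simpa only [mul_zero] using zero_mem_ℓp'
      smul_mem' := fun a x hx ↦ by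
        change Memℓp (fun i ↦ c i * (a * x (σ i))) p
        simpa only [mul_left_comm] using hx.const_mul a }
  toFun :=
    { toFun x := ⟨fun i ↦ c i * x.1 (σ i), x.2⟩
      map_add' _ _ := lp.ext <| funext fun _ ↦ mul_add _ _ _
      map_smul' _ _ := lp.ext <| funext fun _ ↦ mul_left_comm _ _ _ }

variable {p} {σ : ι → ι} {c : ι → 𝕜}

theorem weightedComp_apply (x : (weightedComp p σ c).domain) (i : ι) :
    weightedComp p σ c x i = c i * (x : ℓ^p(ι, 𝕜)) (σ i) :=
  rfl

theorem mem_graph_weightedComp_iff {x y : ℓ^p(ι, 𝕜)} :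
    (x, y) ∈ (weightedComp p σ c).graph ↔ ∀ i, y i = c i * x (σ i) := by
  rw [LinearPMap.mem_graph_iff]
  constructor
  · rintro ⟨x, rfl, rfl⟩ i
    rfl
  · intro h
    have hx : Memℓp (fun i ↦ c i * x (σ i)) p := funext h ▸ lp.memℓp y
    exact ⟨⟨x, hx⟩, rfl, lp.ext (funext fun i ↦ (h i).symm)⟩

theorem isClosed_weightedComp [Fact (1 ≤ p)] : (weightedComp p σ c).IsClosed := by
  have graph_eq : ((weightedComp p σ c).graph : Set (ℓ^p(ι, 𝕜) × ℓ^p(ι, 𝕜))) =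
      ⋂ i, {z | z.2 i = c i * z.1 (σ i)} := by
    ext z
    simpa using mem_graph_weightedComp_iff (x := z.1) (y := z.2)
  have eval_cont (i : ι) : Continuous fun x : ℓ^p(ι, 𝕜) ↦ x i :=
    (lp.evalCLM 𝕜 (fun _ : ι ↦ 𝕜) p i).continuous
  rw [LinearPMap.IsClosed, graph_eq]
  exact isClosed_iInter fun i ↦ isClosed_eq ((eval_cont i).comp continuous_snd)
    (continuous_const.mul ((eval_cont (σ i)).comp continuous_fst))

theorem single_mem_domain_weightedComp [DecidableEq ι] (hσ : Injective σ) (i : ι) (a : 𝕜) :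
    lp.single p i a ∈ (weightedComp p σ c).domain := by
  have support_subset : {j | c j * lp.single (E := fun _ ↦ 𝕜) p i a (σ j) ≠ 0} ⊆ σ ⁻¹' {i} := by
    intro j hj
    by_contra hji
    exact hj (mul_eq_zero_of_right _ (lp.single_apply_ne (E := fun _ ↦ 𝕜) p i a hji))
  exact (memℓp_zero (((Set.finite_singleton i).preimage hσ.injOn).subset
    support_subset)).of_exponent_ge zero_le

theorem dense_domain_weightedComp [Fact (1 ≤ p)] (hp : p ≠ ∞) (hσ : Injective σ) :
    Dense ((weightedComp p σ c).domain : Set ℓ^p(ι, 𝕜)) := by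
  classical
  exact fun x ↦ mem_closure_of_tendsto (lp.hasSum_single hp x) <| .of_forall fun s ↦
    Submodule.sum_mem _ fun i _ ↦ single_mem_domain_weightedComp hσ i (x i)

theorem norm_weight_le_of_norm_weightedComp_le [Fact (1 ≤ p)] (hσ : Injective σ) {C : ℝ}
    (h : ∀ x : (weightedComp p σ c).domain, ‖weightedComp p σ c x‖ ≤ C * ‖(x : ℓ^p(ι, 𝕜))‖)
    (i : ι) : ‖c i‖ ≤ C := by
  classical
  have hp : 0 < p := zero_lt_one.trans_le Fact.out
  let e : (weightedComp p σ c).domain :=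
    ⟨lp.single p (σ i) 1, single_mem_domain_weightedComp hσ (σ i) 1⟩
  calc ‖c i‖ = ‖weightedComp p σ c e i‖ := by
        rw [weightedComp_apply, lp.single_apply_self, mul_one]
    _ ≤ ‖weightedComp p σ c e‖ := lp.norm_apply_le_norm hp.ne' _ i
    _ ≤ C * ‖(e : ℓ^p(ι, 𝕜))‖ := h e
    _ = C := by rw [lp.norm_single hp, norm_one, mul_one]

end WeightedComp

section WeightedCompCLM

variable {ι 𝕜 : Type*} [NontriviallyNormedField 𝕜] {p : ℝ≥0∞} [Fact (1 ≤ p)] {σ : ι → ι}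

/-- The weighted composition operator `x ↦ (i ↦ c i * x (σ i))` on `ℓᵖ` for an injective map `σ`
and a bounded weight `c`, as an everywhere defined bounded operator. -/
noncomputable def weightedCompCLM (hσ : Injective σ) (c : ℓ^∞(ι, 𝕜)) :
    ℓ^p(ι, 𝕜) →L[𝕜] ℓ^p(ι, 𝕜) :=
  have norm_le (x : ℓ^p(ι, 𝕜)) (i : ι) : ‖c i * x (σ i)‖ ≤ ‖c‖ * ‖x (σ i)‖ :=
    norm_mul_le_of_le (lp.norm_apply_le_norm ENNReal.top_ne_zero c i) le_rfl
  LinearMap.mkContinuous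
    { toFun x := ⟨fun i ↦ c i * x (σ i),
        ((memℓp_comp_injective hσ (lp.memℓp x)).norm.const_mul ‖c‖).mono (norm_le x)⟩
      map_add' _ _ := lp.ext <| funext fun _ ↦ mul_add _ _ _
      map_smul' _ _ := lp.ext <| funext fun _ ↦ mul_left_comm _ _ _ }
    ‖c‖ fun x ↦ norm_le_mul_norm_of_injective (zero_lt_one.trans_le Fact.out).ne' hσ
      (norm_nonneg c) (norm_le x)

variable {hσ : Injective σ} {c : ℓ^∞(ι, 𝕜)}

theorem weightedCompCLM_apply (x : ℓ^p(ι, 𝕜)) (i : ι) :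
    weightedCompCLM hσ c x i = c i * x (σ i) :=
  rfl

theorem weightedCompCLM_pow_apply (m : ℕ) (x : ℓ^p(ι, 𝕜)) (i : ι) :
    (weightedCompCLM hσ c ^ m) x i = (∏ l ∈ Finset.range m, c (σ^[l] i)) * x (σ^[m] i) := by
  induction m generalizing x with
  | zero => simp
  | succ m ih =>
    rw [pow_succ, mul_apply_eq_comp, ih, weightedCompCLM_apply, Finset.prod_range_succ, mul_assoc,
      iterate_succ_apply']

theorem norm_weightedCompCLM_pow_le {m : ℕ} {C : ℝ} (hC : 0 ≤ C)
    (h : ∀ i, ∏ l ∈ Finset.range m, ‖c (σ^[l] i)‖ ≤ C) :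
    ‖(weightedCompCLM hσ c : ℓ^p(ι, 𝕜) →L[𝕜] ℓ^p(ι, 𝕜)) ^ m‖ ≤ C := by
  refine ContinuousLinearMap.opNorm_le_bound _ hC fun x ↦
    norm_le_mul_norm_of_injective (zero_lt_one.trans_le Fact.out).ne' (hσ.iterate m) hC fun i ↦ ?_
  rw [weightedCompCLM_pow_apply, norm_mul, norm_prod]
  exact mul_le_mul_of_nonneg_right (h i) (norm_nonneg _)

theorem isResolventAt_zero_weightedComp {τ : ι → ι} {c : ι → 𝕜} {d : ℓ^∞(ι, 𝕜)}
    (hl : LeftInverse τ σ) (hr : RightInverse τ σ) (hdc : ∀ i, d (σ i) * c i = 1) :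
    IsResolventAt (weightedComp p σ c) 0 (weightedCompCLM hr.injective d) := by
  refine .of_graph (fun y ↦ ?_) fun x ↦ lp.ext (funext fun i ↦ ?_)
  · rw [zero_smul, add_zero, mem_graph_weightedComp_iff]
    intro i
    rw [weightedCompCLM_apply, hl i, ← mul_assoc, mul_comm (c i), hdc, one_mul]
  · have hdc' : d i * c (τ i) = 1 := by simpa only [hr i] using hdc (τ i)
    rw [zero_smul, sub_zero, weightedCompCLM_apply, weightedComp_apply, hr i, ← mul_assoc, hdc',
      one_mul]

theorem one_le_mul_norm_sub_of_isResolventAt {c : ι → 𝕜} {z : 𝕜} {R : ℓ^p(ι, 𝕜) →L[𝕜] ℓ^p(ι, 𝕜)}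
    (hR : IsResolventAt (weightedComp p id c) z R) (i : ι) : 1 ≤ ‖R‖ * ‖c i - z‖ := by
  classical
  have hp : 0 < p := zero_lt_one.trans_le Fact.out
  let e : (weightedComp p id c).domain :=
    ⟨lp.single p i 1, single_mem_domain_weightedComp injective_id i 1⟩
  have eigenvector : weightedComp p id c e - z • (e : ℓ^p(ι, 𝕜)) = lp.single p i (c i - z) := by
    ext j
    change c j * e.1 j - z * e.1 j = _
    obtain rfl | hj := eq_or_ne j i
    · simp [e]
    · simp [e, hj]
  simpa only [eigenvector, e, lp.norm_single hp, norm_one] using hR.norm_le e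

theorem exists_isResolventAt_weightedComp_id {c : ι → 𝕜} {z : 𝕜} {ε : ℝ} (hε : 0 < ε)
    (h : ∀ i, ε ≤ ‖c i - z‖) : ∃ R, IsResolventAt (weightedComp p id c) z R := by
  have sub_ne_zero (i : ι) : c i - z ≠ 0 := norm_pos_iff.1 (hε.trans_le (h i))
  let d : ℓ^∞(ι, 𝕜) := ⟨fun i ↦ (c i - z)⁻¹, memℓp_infty ⟨ε⁻¹, by
    rintro _ ⟨i, rfl⟩
    exact (norm_inv (c i - z)).trans_le (inv_anti₀ hε (h i))⟩⟩
  have hd (i : ι) : d i = (c i - z)⁻¹ := rfl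
  refine ⟨weightedCompCLM injective_id d, .of_graph (fun y ↦ ?_) fun x ↦
    lp.ext (funext fun i ↦ ?_)⟩
  · refine mem_graph_weightedComp_iff.2 fun i ↦ ?_
    change y i + z * (d i * y i) = c i * (d i * y i)
    rw [hd]
    field_simp [sub_ne_zero i]
    ring
  · change d i * (c i * x.1 i - z * x.1 i) = x.1 i
    rw [hd, ← sub_mul, inv_mul_cancel_left₀ (sub_ne_zero i)]

theorem pmapSpectrum_weightedComp_id (c : ι → 𝕜) :
    pmapSpectrum (weightedComp p id c) = closure (Set.range c) := by
  ext z
  rw [← not_iff_not, notMem_pmapSpectrum_iff]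
  constructor
  · rintro ⟨R, hR⟩ hz
    have closure_subset : closure (Set.range c) ⊆ {w | 1 ≤ ‖R‖ * ‖w - z‖} :=
      closure_minimal (Set.range_subset_iff.2 (one_le_mul_norm_sub_of_isResolventAt hR))
        (isClosed_le (by fun_prop) (by fun_prop))
    exact absurd (closure_subset hz) (by simp)
  · intro hz
    rw [Metric.mem_closure_range_iff] at hz
    push Not at hz
    obtain ⟨ε, hε, h⟩ := hz
    exact exists_isResolventAt_weightedComp_id hε fun i ↦ by
      simpa only [dist_comm z, dist_eq_norm] using h i

end WeightedCompCLM

section Shift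

theorem isUnit_one_sub_of_norm_pow_lt_one {R : Type*} [NormedRing R] [HasSummableGeomSeries R]
    {a : R} {m : ℕ} (h : ‖a ^ m‖ < 1) : IsUnit (1 - a) := by
  have geom_comm : Commute (1 - a) (∑ k ∈ Finset.range m, a ^ k) := by
    rw [Commute, SemiconjBy, mul_neg_geom_sum, geom_sum_mul_neg]
  refine (geom_comm.isUnit_mul_iff.1 ?_).1
  rw [mul_neg_geom_sum]
  exact isUnit_one_sub_of_norm_lt_one h

theorem sq_le_sum_natAbs_sub (j : ℕ) (n : ℤ) :
    j ^ 2 ≤ ∑ l ∈ Finset.range (2 * j), (n - l).natAbs := by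
  induction j generalizing n with
  | zero => simp
  | succ j ih =>
    have outer : 2 * j + 1 ≤ n.natAbs + (n - (2 * j + 1)).natAbs := by omega
    have inner : ∑ l ∈ Finset.range (2 * j), (n - (l + 1 : ℕ)).natAbs =
        ∑ l ∈ Finset.range (2 * j), (n - 1 - l).natAbs :=
      Finset.sum_congr rfl fun l _ ↦ by congr 1; push_cast; ring
    calc (j + 1) ^ 2 = j ^ 2 + (2 * j + 1) := by ring
      _ ≤ ∑ l ∈ Finset.range (2 * j), (n - 1 - l).natAbs +
          (n.natAbs + (n - (2 * j + 1)).natAbs) := add_le_add (ih (n - 1)) outer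
      _ = ∑ l ∈ Finset.range (2 * (j + 1)), (n - l).natAbs := by
        rw [show 2 * (j + 1) = 2 * j + 1 + 1 by ring, Finset.sum_range_succ,
          Finset.sum_range_succ', inner]
        push_cast
        rw [sub_zero, add_assoc]

variable {𝕜 : Type*} [NontriviallyNormedField 𝕜] {p : ℝ≥0∞} [Fact (1 ≤ p)]

theorem norm_pow_weightedCompCLM_sub_one_le {d : ℓ^∞(ℤ, 𝕜)} {r : ℝ} {k : ℤ} (hr₀ : 0 ≤ r)
    (hr₁ : r ≤ 1) (hd : ∀ n, ‖d n‖ ≤ r ^ (n - k).natAbs)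
    (hσ : Injective fun n : ℤ ↦ n - 1) (j : ℕ) :
    ‖(weightedCompCLM hσ d : ℓ^p(ℤ, 𝕜) →L[𝕜] ℓ^p(ℤ, 𝕜)) ^ (2 * j)‖ ≤ r ^ j ^ 2 := by
  have iterate_sub_one (l : ℕ) (n : ℤ) : (fun n : ℤ ↦ n - 1)^[l] n = n - l := by
    simp [sub_eq_add_neg]
  refine norm_weightedCompCLM_pow_le (by positivity) fun n ↦ ?_
  calc ∏ l ∈ Finset.range (2 * j), ‖d ((fun n : ℤ ↦ n - 1)^[l] n)‖
      ≤ ∏ l ∈ Finset.range (2 * j), r ^ (n - k - l).natAbs := by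
        gcongr with l
        rw [iterate_sub_one, sub_right_comm]
        exact hd _
    _ = r ^ ∑ l ∈ Finset.range (2 * j), (n - k - l).natAbs := Finset.prod_pow_eq_pow_sum _ _ _
    _ ≤ r ^ j ^ 2 := pow_le_pow_of_le_one hr₀ hr₁ (sq_le_sum_natAbs_sub j (n - k))

theorem isUnit_one_sub_smul_weightedCompCLM_sub_one [CompleteSpace 𝕜] {d : ℓ^∞(ℤ, 𝕜)} {r : ℝ}
    {k : ℤ} (hr₀ : 0 ≤ r) (hr₁ : r < 1) (hd : ∀ n, ‖d n‖ ≤ r ^ (n - k).natAbs)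
    (hσ : Injective fun n : ℤ ↦ n - 1) (z : 𝕜) :
    IsUnit (1 - z • (weightedCompCLM hσ d : ℓ^p(ℤ, 𝕜) →L[𝕜] ℓ^p(ℤ, 𝕜))) := by
  have pow_tendsto : Tendsto (fun j : ℕ ↦ ‖z‖ ^ 2 * r ^ j) atTop (𝓝 0) := by
    simpa using (tendsto_pow_atTop_nhds_zero_of_lt_one hr₀ hr₁).const_mul (‖z‖ ^ 2)
  obtain ⟨j, hj, hj₀⟩ :=
    ((pow_tendsto.eventually_lt_const one_pos).and (eventually_ne_atTop 0)).exists
  refine isUnit_one_sub_of_norm_pow_lt_one (m := 2 * j) ?_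
  rw [smul_pow, norm_smul, norm_pow]
  calc ‖z‖ ^ (2 * j) * ‖(weightedCompCLM hσ d : ℓ^p(ℤ, 𝕜) →L[𝕜] ℓ^p(ℤ, 𝕜)) ^ (2 * j)‖
      ≤ ‖z‖ ^ (2 * j) * r ^ j ^ 2 := by
        gcongr
        exact norm_pow_weightedCompCLM_sub_one_le hr₀ hr₁.le hd hσ j
    _ = (‖z‖ ^ 2 * r ^ j) ^ j := by rw [mul_pow, ← pow_mul, ← pow_mul, sq j]
    _ < 1 := pow_lt_one₀ (by positivity) hj hj₀

theorem pmapSpectrum_weightedComp_add_one [CompleteSpace 𝕜] {a : 𝕜} (ha : 1 < ‖a‖) :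
    pmapSpectrum (weightedComp p (fun n : ℤ ↦ n + 1) fun n ↦ a ^ n.natAbs) = ∅ := by
  have ha₀ : a ≠ 0 := norm_pos_iff.1 (one_pos.trans ha)
  have hr : ‖a⁻¹‖ < 1 := (norm_inv a).trans_lt (inv_lt_one_of_one_lt₀ ha)
  let d : ℓ^∞(ℤ, 𝕜) := ⟨fun n ↦ a⁻¹ ^ (n - 1).natAbs, memℓp_infty ⟨1, by
    rintro _ ⟨n, rfl⟩
    exact (norm_pow _ _).trans_le (pow_le_one₀ (norm_nonneg _) hr.le)⟩⟩
  have resolvent := isResolventAt_zero_weightedComp (p := p) (σ := fun n : ℤ ↦ n + 1)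
    (τ := fun n ↦ n - 1) (c := fun n ↦ a ^ n.natAbs) (d := d) (fun n ↦ add_sub_cancel_right n 1)
    (fun n ↦ sub_add_cancel n 1) fun n ↦ by
      change a⁻¹ ^ (n + 1 - 1).natAbs * a ^ n.natAbs = 1
      rw [add_sub_cancel_right, ← mul_pow, inv_mul_cancel₀ ha₀, one_pow]
  refine Set.eq_empty_of_forall_notMem fun z ↦ resolvent.notMem_pmapSpectrum_of_isUnit ?_
  exact isUnit_one_sub_smul_weightedCompCLM_sub_one (norm_nonneg _) hr
    (fun n ↦ (norm_pow a⁻¹ _).le) _ _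

end Shift

theorem exists_mem_domain_of_tendsto {α R E F : Type*} [CommRing R] [AddCommGroup E]
    [AddCommGroup F] [Module R E] [Module R F] [TopologicalSpace E] [TopologicalSpace F]
    {A : E →ₗ.[R] F} (hA : A.IsClosed) {l : Filter α} [l.NeBot] {u : α → A.domain} {x : E} {y : F}
    (hx : Tendsto (fun k ↦ (u k : E)) l (𝓝 x)) (hy : Tendsto (fun k ↦ A (u k)) l (𝓝 y)) :
    ∃ h : x ∈ A.domain, A ⟨x, h⟩ = y := by
  have mem_graph : (x, y) ∈ A.graph := hA.mem_of_tendsto (hx.prodMk_nhds hy) <| .of_forall fun k ↦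
    A.mem_graph (u k)
  obtain ⟨x, rfl, hAx⟩ := A.mem_graph_iff.1 mem_graph
  exact ⟨x.2, hAx⟩

universe u

theorem exists_unbounded_closed_operator_with_compact_spectrum_general {𝕜 : Type u} [RCLike 𝕜]
    (K : Set 𝕜) (hK : IsClosed K) :
    ∃ (H : Type u) (_ : NormedAddCommGroup H) (_ : InnerProductSpace 𝕜 H) (_ : CompleteSpace H)
      (A : H →ₗ.[𝕜] H),
      Dense (A.domain : Set H) ∧ A.IsClosed ∧
      (¬∃ C : ℝ, ∀ x : A.domain, ‖A x‖ ≤ C * ‖(x : H)‖) ∧ pmapSpectrum A = K := by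
  have two_ne_top : (2 : ℝ≥0∞) ≠ ∞ := ENNReal.ofNat_ne_top
  let M := weightedComp 2 id ((↑) : K → 𝕜)
  let S := weightedComp 2 (fun n : ℤ ↦ n + 1) fun n ↦ (2 : 𝕜) ^ n.natAbs
  have norm_two : 1 < ‖(2 : 𝕜)‖ := by simp
  have add_one_injective : Injective fun n : ℤ ↦ n + 1 := add_left_injective 1
  refine ⟨WithLp 2 (ℓ²(K, 𝕜) × ℓ²(ℤ, 𝕜)), inferInstance, inferInstance, inferInstance,
    pmapDirectSum 2 M S, ?_, ?_, ?_, ?_⟩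
  · exact dense_domain_pmapDirectSum (dense_domain_weightedComp two_ne_top injective_id)
      (dense_domain_weightedComp two_ne_top add_one_injective)
  · exact isClosed_pmapDirectSum isClosed_weightedComp isClosed_weightedComp
  · rintro ⟨C, hC⟩
    obtain ⟨n, hn⟩ := pow_unbounded_of_one_lt C norm_two
    have weight_le := norm_weight_le_of_norm_weightedComp_le add_one_injective
      (norm_le_of_norm_pmapDirectSum_le_right hC) n
    rw [norm_pow, Int.natAbs_natCast] at weight_le
    exact hn.not_ge weight_le
  · rw [pmapSpectrum_pmapDirectSum, pmapSpectrum_weightedComp_id,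
      pmapSpectrum_weightedComp_add_one norm_two, Subtype.range_coe, hK.closure_eq, Set.union_empty]

/-- For every nonempty compact subset `K` of `ℂ` there exist a complex Hilbert space `H`,
a dense subspace `D` of `H`, and an unbounded closed linear operator `A : D → H`
whose spectrum is exactly `K`. -/
theorem exists_unbounded_closed_operator_with_compact_spectrum
    (K : Set ℂ) (hK : K.Nonempty) (hcpt : IsCompact K) :
    ∃ (H : Type) (_ : NormedAddCommGroup H) (_ : InnerProductSpace ℂ H) (_ : CompleteSpace H)
      (D : Submodule ℂ H) (A : D →ₗ[ℂ] H),
      Dense (D : Set H) ∧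
      -- closed graph
      (∀ (xk : ℕ → D) (x y : H),
        Filter.Tendsto (fun k => (xk k : H)) Filter.atTop (nhds x) →
        Filter.Tendsto (fun k => A (xk k)) Filter.atTop (nhds y) →
        ∃ hx : x ∈ D, A ⟨x, hx⟩ = y) ∧
      -- unbounded
      (¬ ∃ C : ℝ, 0 ≤ C ∧ ∀ x : D, ‖A x‖ ≤ C * ‖(x : H)‖) ∧
      -- the spectrum of A is σ
      (∀ lam : ℂ, lam ∉ K ↔
        ∃ (R : H →L[ℂ] H) (hR : ∀ y : H, R y ∈ D),
          (∀ y : H, A ⟨R y, hR y⟩ - lam • R y = y) ∧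
          (∀ x : D, R (A x - lam • (x : H)) = x)) := by
  obtain ⟨H, _, _, _, A, hd, hcl, hub, rfl⟩ :=
    exists_unbounded_closed_operator_with_compact_spectrum_general K hcpt.isClosed
  exact ⟨H, _, _, ‹_›, A.domain, A.toFun, hd, fun _ _ _ ↦ exists_mem_domain_of_tendsto hcl,
    fun ⟨C, _, hC⟩ ↦ hub ⟨C, hC⟩, fun _ ↦ notMem_pmapSpectrum_iff.trans
      ⟨fun ⟨R, hR⟩ ↦ ⟨R, hR.1, hR.2, hR.3⟩, fun ⟨R, h₁, h₂, h₃⟩ ↦ ⟨R, h₁, h₂, h₃⟩⟩⟩
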